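/- Let G be a finite group with o(G) = 13/6. Then G is isomorphic to the symmetric group S_3 on 3 letters. -/

import Mathlib

/-- The average element order `o(G) = ψ(G)/|G|` of a finite group `G`,
where `ψ(G) = ∑_{x ∈ G} |x|` is the sum of the orders of all elements of `G`. -/
noncomputable def avgOrder (G : Type*) [Group G] [Fintype G] : ℚ :=
  (∑ x : G, (orderOf x : ℚ)) / (Fintype.card G : ℚ)

/-!
Let `n = |G|` and let `k` be the number of `x ∈ G` with `x = x⁻¹`. All other elements have order at
least `3`, so `3n ≤ ψ(G) + k + 1`, that is, `5n/6 ≤ k + 1`. As `6ψ(G) = 13n`, the order `n` is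
divisible by `6`, so `G` has an element of order `3`, which the identity map does not invert. By
Miller's theorem, a homomorphism inverting more than three quarters of a group inverts all of it;
so `k ≤ 3n/4`, and hence `n ≤ 12`. If `n = 12`, then `k = 9`, but `n - k` is even because inversion
pairs up the remaining elements. So `n = 6` and `k ≥ 4`. A homomorphism inverting more than half of
an abelian group inverts all of it, so `G` is not abelian, and the action of `G` on the cosets of a
subgroup of order `2` is an isomorphism onto `S_3`.
-/

open Subgroup
open scoped Nat

theorem card_modEq_ncard_eq_inv {α : Type*} [InvolutiveInv α] [Finite α] :
    Nat.card α ≡ {x : α | x = x⁻¹}.ncard [MOD 2] := by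
  classical
  have := Fintype.ofFinite α
  let inversion : Function.End α := Inv.inv
  have hinv : inversion ^ 2 ^ 1 = 1 := funext inv_inv
  have hfix : {x : α | x = x⁻¹} = Function.fixedPoints inversion := Set.ext fun _ ↦ eq_comm
  rw [hfix, ← Nat.card_coe_set_eq, Nat.card_eq_fintype_card, Nat.card_eq_fintype_card]
  exact Equiv.Perm.card_fixedPoints_modEq hinv

section Group

variable {G : Type*} [Group G]

theorem subgroup_eq_top_of_card_lt_two_mul_ncard [Finite G] {H : Subgroup G} {S : Set G}
    (hSH : S ⊆ H) (hS : Nat.card G < 2 * S.ncard) : H = ⊤ := by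
  by_contra hH
  have hcard : S.ncard ≤ Nat.card H := Set.ncard_le_ncard hSH
  have hindex : Nat.card H * 2 ≤ Nat.card H * H.index :=
    Nat.mul_le_mul_left _ (one_lt_index_of_ne_top hH)
  rw [H.card_mul_index] at hindex
  lia

section Miller

variable {f : G →* G}

theorem commute_of_map_eq_inv {x y : G} (hx : f x = x⁻¹) (hy : f y = y⁻¹)
    (hxy : f (x * y) = (x * y)⁻¹) : Commute x y := by
  rw [map_mul, hx, hy, mul_inv_rev] at hxy
  exact Commute.inv_inv_iff.mp hxy

variable [Finite G]

theorem mem_center_of_map_eq_inv (hf : 3 * Nat.card G < 4 * {x | f x = x⁻¹}.ncard) {x : G}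
    (hx : f x = x⁻¹) : x ∈ center G := by
  set I : Set G := {y | f y = y⁻¹}
  set J : Set G := (x * ·) ⁻¹' I
  have hJ : J.ncard = I.ncard :=
    Set.ncard_preimage_of_injective_subset_range (mul_right_injective x)
      fun y _ ↦ ⟨x⁻¹ * y, mul_inv_cancel_left x y⟩
  have hIJ : (I ∪ J).ncard + (I ∩ J).ncard = I.ncard + J.ncard :=
    Set.ncard_union_add_ncard_inter I J
  have hle : (I ∪ J).ncard ≤ Nat.card G := Set.ncard_le_card _
  have hcentralizer : I ∩ J ⊆ centralizer {x} := fun y hy ↦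
    mem_centralizer_singleton_iff.mpr (commute_of_map_eq_inv hx hy.1 hy.2).symm
  have htop : centralizer {x} = ⊤ :=
    subgroup_eq_top_of_card_lt_two_mul_ncard hcentralizer (by lia)
  exact centralizer_eq_top_iff_subset.mp htop rfl

theorem isMulCommutative_of_three_mul_card_lt_four_mul_ncard
    (hf : 3 * Nat.card G < 4 * {x | f x = x⁻¹}.ncard) :
    IsMulCommutative G :=
  center_eq_top_iff.mp <|
    subgroup_eq_top_of_card_lt_two_mul_ncard (S := {x | f x = x⁻¹})
      (fun _ ↦ mem_center_of_map_eq_inv hf) (by lia)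

open scoped IsMulCommutative in
theorem map_eq_inv_of_card_lt_two_mul_ncard [IsMulCommutative G]
    (hf : Nat.card G < 2 * {x | f x = x⁻¹}.ncard) (x : G) : f x = x⁻¹ := by
  have htop : f.eqLocus invMonoidHom = ⊤ :=
    subgroup_eq_top_of_card_lt_two_mul_ncard (fun _ hy ↦ hy) hf
  exact htop.ge (mem_top x)

theorem map_eq_inv_of_three_mul_card_lt_four_mul_ncard
    (hf : 3 * Nat.card G < 4 * {x | f x = x⁻¹}.ncard) (x : G) : f x = x⁻¹ :=
  have := isMulCommutative_of_three_mul_card_lt_four_mul_ncard hf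
  map_eq_inv_of_card_lt_two_mul_ncard (by lia) x

end Miller

theorem eq_inv_iff_orderOf_dvd_two {x : G} : x = x⁻¹ ↔ orderOf x ∣ 2 := by
  rw [orderOf_dvd_iff_pow_eq_one, sq, mul_eq_one_iff_eq_inv]

theorem three_mul_card_le_sum_orderOf [Fintype G] :
    3 * Nat.card G ≤ ∑ x : G, orderOf x + {x : G | x = x⁻¹}.ncard + 1 := by
  classical
  have hbound (x : G) :
      3 ≤ orderOf x + (if x = x⁻¹ then 1 else 0) + (if x = 1 then 1 else 0) := by
    have hpos := orderOf_pos x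
    have hone : orderOf x = 1 ↔ x = 1 := orderOf_eq_one_iff
    have htwo := eq_inv_iff_orderOf_dvd_two (x := x)
    rw [Nat.dvd_prime Nat.prime_two] at htwo
    split_ifs <;> grind
  calc 3 * Nat.card G
    _ = ∑ _x : G, 3 := by simp [mul_comm]
    _ ≤ ∑ x : G, (orderOf x + (if x = x⁻¹ then 1 else 0) + (if x = 1 then 1 else 0)) :=
      Finset.sum_le_sum fun x _ ↦ hbound x
    _ = ∑ x : G, orderOf x + {x : G | x = x⁻¹}.ncard + 1 := by
      simp [Finset.sum_add_distrib, Set.ncard_eq_toFinset_card']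

theorem le_center_of_card_eq_two {N : Subgroup G} [N.Normal] (hN : Nat.card N = 2) :
    N ≤ center G := by
  obtain ⟨t, -, ht⟩ := (Nat.card_eq_two_iff' (1 : N)).mp hN
  have heq {y : G} (hy : y ∈ N) (hy1 : y ≠ 1) : y = t :=
    congrArg Subtype.val (ht ⟨y, hy⟩ (by simpa using hy1))
  intro x hx
  rcases eq_or_ne x 1 with rfl | hx1
  · exact one_mem _
  refine mem_center_iff.mpr fun g ↦ mul_inv_eq_iff_eq_mul.mp ?_
  rw [heq (Normal.conj_mem ‹_› x hx g) (by simpa using hx1), ← heq hx hx1]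

theorem normalCore_eq_bot_of_card_eq_two (hG : ¬IsMulCommutative G) {H : Subgroup G}
    (hH : Nat.card H = 2) (hindex : H.index.Prime) : H.normalCore = ⊥ := by
  by_contra hcore
  have : Finite H := Nat.finite_of_card_ne_zero (by lia)
  have hcard : Nat.card H.normalCore = 2 :=
    ((Nat.dvd_prime Nat.prime_two).mp (hH ▸ card_dvd_of_le H.normalCore_le)).resolve_left
      (mt (eq_bot_of_card_eq _) hcore)
  have hnormal : H.Normal := by
    rw [← eq_of_le_of_card_ge H.normalCore_le (hH.trans hcard.symm).le]
    infer_instance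
  have := Fact.mk hindex
  have : IsCyclic (G ⧸ H) := isCyclic_of_prime_card H.index_eq_card.symm
  refine hG ((QuotientGroup.mk' H).isMulCommutative_of_isCyclic_of_ker_le_center ?_)
  rw [QuotientGroup.ker_mk']
  exact le_center_of_card_eq_two hH

theorem nonempty_mulEquiv_perm_of_normalCore_eq_bot {H : Subgroup G} (hH : H.normalCore = ⊥)
    (hcard : Nat.card G = H.index !) : Nonempty (G ≃* Equiv.Perm (Fin H.index)) := by
  have : Finite G := Nat.finite_of_card_ne_zero (hcard ▸ Nat.factorial_ne_zero _)
  have hinj : Function.Injective (MulAction.toPermHom G (G ⧸ H)) := by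
    rw [← MonoidHom.ker_eq_bot_iff, ← normalCore_eq_ker, hH]
  have hbij : Function.Bijective (MulAction.toPermHom G (G ⧸ H)) := by
    refine (Nat.bijective_iff_injective_and_card _).mpr ⟨hinj, ?_⟩
    rw [hcard, Nat.card_perm, H.index_eq_card]
  exact ⟨(MulEquiv.ofBijective _ hbij).trans
    (Finite.equivFinOfCardEq H.index_eq_card.symm).permCongrHom⟩

theorem nonempty_mulEquiv_perm_fin_three_of_card_eq_six (hG : ¬IsMulCommutative G)
    (hcard : Nat.card G = 6) : Nonempty (G ≃* Equiv.Perm (Fin 3)) := by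
  have : Finite G := Nat.finite_of_card_ne_zero (by lia)
  obtain ⟨t, ht⟩ := exists_prime_orderOf_dvd_card' (G := G) 2 (by lia)
  have hH : Nat.card (zpowers t) = 2 := by rw [Nat.card_zpowers, ht]
  have hindex : (zpowers t).index = 3 := by
    have := (zpowers t).card_mul_index
    lia
  have hcore : (zpowers t).normalCore = ⊥ :=
    normalCore_eq_bot_of_card_eq_two hG hH (hindex ▸ Nat.prime_three)
  exact hindex ▸ nonempty_mulEquiv_perm_of_normalCore_eq_bot hcore (by rw [hcard, hindex]; rfl)

theorem exists_ne_inv_of_three_dvd_card [Finite G] (h : 3 ∣ Nat.card G) : ∃ x : G, x ≠ x⁻¹ := by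
  obtain ⟨c, hc⟩ := exists_prime_orderOf_dvd_card' 3 h
  exact ⟨c, by simp [eq_inv_iff_orderOf_dvd_two, hc]⟩

end Group

section AvgOrder

variable {G : Type*} [Group G] [Fintype G]

theorem card_mul_avgOrder : Nat.card G * avgOrder G = ∑ x : G, (orderOf x : ℚ) := by
  rw [avgOrder, Nat.card_eq_fintype_card]
  exact mul_div_cancel₀ _ (by simp)

theorem six_mul_sum_orderOf_of_avgOrder_eq (h : avgOrder G = 13 / 6) :
    6 * ∑ x : G, orderOf x = 13 * Nat.card G := by
  have hsum := card_mul_avgOrder (G := G)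
  rw [h] at hsum
  have : 6 * ∑ x : G, (orderOf x : ℚ) = 13 * Nat.card G := by linarith
  exact_mod_cast this

end AvgOrder

theorem iso_symmGroup_three_of_avgOrder_eq {G : Type*} [Group G] [Fintype G]
    (h : avgOrder G = 13 / 6) : Nonempty (G ≃* Equiv.Perm (Fin 3)) := by
  have hsum : 6 * ∑ x : G, orderOf x = 13 * Nat.card G := six_mul_sum_orderOf_of_avgOrder_eq h
  have hbound : 3 * Nat.card G ≤ ∑ x : G, orderOf x + {x : G | x = x⁻¹}.ncard + 1 :=
    three_mul_card_le_sum_orderOf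
  have hpos : 0 < Nat.card G := Nat.card_pos
  obtain ⟨c, hc⟩ : ∃ c : G, c ≠ c⁻¹ := exists_ne_inv_of_three_dvd_card (by lia)
  have hmiller : 4 * {x : G | x = x⁻¹}.ncard ≤ 3 * Nat.card G := by
    by_contra! hlt
    exact hc (map_eq_inv_of_three_mul_card_lt_four_mul_ncard (f := MonoidHom.id G) hlt c)
  have hparity : Nat.card G % 2 = {x : G | x = x⁻¹}.ncard % 2 := card_modEq_ncard_eq_inv
  have hcard : Nat.card G = 6 := by lia
  have hnoncomm : ¬IsMulCommutative G := fun _ ↦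
    hc (map_eq_inv_of_card_lt_two_mul_ncard (f := MonoidHom.id G)
      (show Nat.card G < 2 * {x : G | x = x⁻¹}.ncard by lia) c)
  exact nonempty_mulEquiv_perm_fin_three_of_card_eq_six hnoncomm hcard
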